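/- Let f_m be a homogeneous polynomial of degree m in x_0,...,x_k and γ ∈ ℝ. Then for all x ≠ 0: f_m(D_0,...,D_k)[r^{2γ}] = Σ_{j=0}^m 2^{m-2j} (-1)^{m-j} (-γ)_{m-j} r^{2(γ-m+j)} · (1/j!) Δ_α^j f_m(x), where r² = Σ_j x_j² and (a)_n is the Pochhammer symbol. -/

import Mathlib

open MvPolynomial

variable {k : ℕ}

/-- Reflection of the `j`-th variable: the algebra map sending `X j ↦ -X j`. -/
noncomputable def reflectVar (j : Fin (k + 1)) :
    MvPolynomial (Fin (k + 1)) ℝ →ₐ[ℝ] MvPolynomial (Fin (k + 1)) ℝ :=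
  aeval (fun i => if i = j then -X i else X i)

/-- The `j`-th Dunkl operator on polynomials (exact division by `x_j` via `divMonomial`). -/
noncomputable def dunklD (α : Fin (k + 1) → ℝ) (j : Fin (k + 1))
    (p : MvPolynomial (Fin (k + 1)) ℝ) : MvPolynomial (Fin (k + 1)) ℝ :=
  pderiv j p + C (α j) * (p - reflectVar j p).divMonomial (Finsupp.single j 1)

/-- The Dunkl Laplacian `Δ_α = ∑_j D_j²` on polynomials. -/
noncomputable def dunklLap (α : Fin (k + 1) → ℝ)
    (p : MvPolynomial (Fin (k + 1)) ℝ) : MvPolynomial (Fin (k + 1)) ℝ :=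
  ∑ j, dunklD α j (dunklD α j p)

/-- The `j`-th Dunkl operator acting on functions:
`D_j f (x) = ∂_j f(x) + α_j (f(x) - f(σ_j x))/x_j`. -/
noncomputable def dunklF (α : Fin (k + 1) → ℝ) (j : Fin (k + 1))
    (f : (Fin (k + 1) → ℝ) → ℝ) : (Fin (k + 1) → ℝ) → ℝ :=
  fun x => fderiv ℝ f x (Pi.single j 1)
    + α j * (f x - f (Function.update x j (-(x j)))) / x j

/-- The differential-difference operator `D^β = D_0^{β_0} ∘ ⋯ ∘ D_k^{β_k}`
associated to a monomial exponent `β` (the Dunkl operators commute, so the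
order of composition is immaterial). -/
noncomputable def dunklMonomialOp (α : Fin (k + 1) → ℝ) (β : Fin (k + 1) →₀ ℕ)
    (f : (Fin (k + 1) → ℝ) → ℝ) : (Fin (k + 1) → ℝ) → ℝ :=
  (List.ofFn fun j : Fin (k + 1) => (dunklF α j)^[β j]).foldr (· ∘ ·) id f

/-- `f(D_0,…,D_k)` for a polynomial `f`: substitute the Dunkl operators for the variables. -/
noncomputable def dunklOp (α : Fin (k + 1) → ℝ) (p : MvPolynomial (Fin (k + 1)) ℝ)
    (f : (Fin (k + 1) → ℝ) → ℝ) : (Fin (k + 1) → ℝ) → ℝ :=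
  fun x => ∑ β ∈ p.support, coeff β p * dunklMonomialOp α β f x

/-!
The formula is an instance of one for every radial function `φ(r²)`. Since `φ(r²)` is even in
each variable, `D_i (φ(r²) q) = φ(r²) D_i q + 2 φ'(r²) x_i q` for a polynomial `q`, while
`[Δ_α, x_i] = 2 D_i` and the commutativity of the Dunkl operators give
`[Δ_α ^ (j + 1), x_i] = 2 (j + 1) D_i Δ_α ^ j`. Hence applying `D_i` to the right-hand side for `p`
produces the right-hand side for `x_i p`, and the formula follows for monomials one factor at a
time. The powers `r^{2γ}` are the case `φ(t) = t ^ γ`.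
-/

theorem pow_succ_mul_of_mul_eq_mul_add {R : Type*} [Semiring R] {a b c : R}
    (hab : a * b = b * a + c) (hac : Commute a c) (n : ℕ) :
    a ^ (n + 1) * b = b * a ^ (n + 1) + (n + 1) • (c * a ^ n) := by
  induction n with
  | zero => simp [hab]
  | succ n ih =>
    calc a ^ (n + 2) * b
        = a * b * a ^ (n + 1) + (n + 1) • (a * c * a ^ n) := by
          rw [pow_succ', mul_assoc, ih, mul_add, mul_smul_comm, mul_assoc, mul_assoc]
      _ = b * a ^ (n + 2) + (n + 2) • (c * a ^ (n + 1)) := by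
          rw [hab, hac.eq, add_mul, mul_assoc, mul_assoc, ← pow_succ', ← pow_succ', add_assoc,
            ← succ_nsmul']

section Polynomials

open Finset

theorem reflectVar_X_self (j : Fin (k + 1)) : reflectVar j (X j) = -X j := by
  simp [reflectVar]

theorem reflectVar_X_of_ne {i j : Fin (k + 1)} (hij : i ≠ j) : reflectVar j (X i) = X i := by
  simp [reflectVar, hij]

theorem reflectVar_monomial (j : Fin (k + 1)) (β : Fin (k + 1) →₀ ℕ) (c : ℝ) :
    reflectVar j (monomial β c) = monomial β ((-1) ^ β j * c) := by
  have hprod : (β.prod fun i n => (if i = j then -1 else 1 : MvPolynomial (Fin (k + 1)) ℝ) ^ n) =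
      (-1) ^ β j := by
    rw [Finsupp.prod_fintype _ _ fun _ => pow_zero _]
    simp [ite_pow]
  have hX (i : Fin (k + 1)) : (if i = j then -X i else X i : MvPolynomial (Fin (k + 1)) ℝ) =
      (if i = j then -1 else 1) * X i := by
    split_ifs <;> simp
  rw [reflectVar, aeval_monomial]
  simp only [hX, mul_pow]
  rw [Finsupp.prod_mul, hprod, monomial_eq, map_mul]
  simp [mul_assoc, mul_left_comm]

theorem X_dvd_sub_reflectVar (j : Fin (k + 1)) (p : MvPolynomial (Fin (k + 1)) ℝ) :
    X j ∣ p - reflectVar j p := by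
  induction p using MvPolynomial.induction_on' with
  | monomial β c =>
    rw [reflectVar_monomial, ← map_sub, X_dvd_monomial]
    exact or_iff_not_imp_right.2 fun hβ => by simp [not_not.1 hβ]
  | add p q hp hq => simpa only [map_add, add_sub_add_comm] using dvd_add hp hq

variable (α : Fin (k + 1) → ℝ)

theorem X_mul_dunklD (j : Fin (k + 1)) (p : MvPolynomial (Fin (k + 1)) ℝ) :
    X j * dunklD α j p = X j * pderiv j p + C (α j) * (p - reflectVar j p) := by
  obtain ⟨q, hq⟩ := X_dvd_sub_reflectVar j p
  rw [dunklD, hq, X_mul_divMonomial]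
  ring

/-- The `j`-th Dunkl operator on polynomials as an `ℝ`-linear endomorphism. -/
noncomputable def dunklDEnd (j : Fin (k + 1)) :
    Module.End ℝ (MvPolynomial (Fin (k + 1)) ℝ) where
  toFun := dunklD α j
  map_add' p q := by
    rw [← X_mul_cancel_left_iff (i := j), mul_add]
    simp only [X_mul_dunklD, map_add]
    ring
  map_smul' c p := by
    rw [← X_mul_cancel_left_iff (i := j), RingHom.id_apply, mul_smul_comm]
    rw [X_mul_dunklD, X_mul_dunklD, Derivation.map_smul, map_smul]
    simp only [smul_eq_C_mul]
    ring

/-- The Dunkl Laplacian on polynomials as an `ℝ`-linear endomorphism. -/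
noncomputable def dunklLapEnd : Module.End ℝ (MvPolynomial (Fin (k + 1)) ℝ) where
  toFun := dunklLap α
  map_add' p q := by
    change ∑ j, (dunklDEnd α j * dunklDEnd α j) (p + q) = _
    simp only [map_add, sum_add_distrib]
    rfl
  map_smul' c p := by
    change ∑ j, (dunklDEnd α j * dunklDEnd α j) (c • p) = _
    simp only [map_smul, ← smul_sum]
    rfl

theorem dunklLapEnd_eq_sum : dunklLapEnd α = ∑ j, dunklDEnd α j * dunklDEnd α j := by
  refine LinearMap.ext fun p => ?_
  rw [LinearMap.sum_apply]
  rfl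

theorem dunklLapEnd_pow_apply (n : ℕ) (p : MvPolynomial (Fin (k + 1)) ℝ) :
    (dunklLapEnd α ^ n) p = (dunklLap α)^[n] p :=
  Module.End.pow_apply _ _ _

theorem dunklD_zero (j : Fin (k + 1)) : dunklD α j 0 = 0 := map_zero (dunklDEnd α j)

theorem dunklLap_iterate_zero (n : ℕ) : (dunklLap α)^[n] 0 = 0 := by
  rw [← dunklLapEnd_pow_apply, map_zero]

theorem dunklLap_C (a : ℝ) : dunklLap α (C a) = 0 := by
  have hD (j : Fin (k + 1)) : dunklD α j (C a) = 0 := by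
    rw [dunklD, pderiv_C, algHom_C, algebraMap_eq, sub_self, zero_divMonomial, mul_zero, add_zero]
  simp only [dunklLap, hD, dunklD_zero, sum_const_zero]

theorem dunklD_monomial (j : Fin (k + 1)) (β : Fin (k + 1) →₀ ℕ) (c : ℝ) :
    dunklD α j (monomial β c) =
      monomial (β - Finsupp.single j 1) ((β j + α j * (1 - (-1) ^ β j)) * c) := by
  rw [dunklD, reflectVar_monomial, pderiv_monomial, ← map_sub]
  rcases eq_or_ne (β j) 0 with hβ | hβ
  · simp [hβ]
  · have hsplit : monomial β (c - (-1) ^ β j * c) =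
        X j * monomial (β - Finsupp.single j 1) (c - (-1) ^ β j * c) := by
      rw [X, monomial_mul, one_mul, add_tsub_cancel_of_le]
      exact Finsupp.single_le_iff.2 (Nat.one_le_iff_ne_zero.2 hβ)
    rw [hsplit, X_mul_divMonomial, C_mul_monomial, ← map_add]
    congr 1
    ring

theorem dunklD_reflectVar_self (i : Fin (k + 1)) (p : MvPolynomial (Fin (k + 1)) ℝ) :
    dunklD α i (reflectVar i p) = -reflectVar i (dunklD α i p) := by
  suffices h : dunklDEnd α i * (reflectVar i).toLinearMap =
      -((reflectVar i).toLinearMap * dunklDEnd α i) from LinearMap.congr_fun h p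
  refine linearMap_ext fun β => LinearMap.ext fun c => ?_
  change dunklD α i (reflectVar i (monomial β c)) = -reflectVar i (dunklD α i (monomial β c))
  simp only [reflectVar_monomial, dunklD_monomial, ← map_neg]
  congr 1
  rcases h : β i with _ | n
  · simp
  · simp only [Finsupp.tsub_apply, Finsupp.single_eq_same, h, add_tsub_cancel_right, Nat.cast_succ,
      pow_succ]
    ring

theorem dunklDEnd_commute (i j : Fin (k + 1)) : Commute (dunklDEnd α i) (dunklDEnd α j) := by
  rcases eq_or_ne i j with rfl | hij
  · exact Commute.refl _
  refine linearMap_ext fun β => LinearMap.ext fun c => ?_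
  change dunklD α i (dunklD α j (monomial β c)) = dunklD α j (dunklD α i (monomial β c))
  simp only [dunklD_monomial, tsub_right_comm]
  congr 1
  simp only [Finsupp.tsub_apply, Finsupp.single_eq_of_ne hij, Finsupp.single_eq_of_ne hij.symm,
    tsub_zero]
  ring

theorem dunklD_X_mul_of_ne {i j : Fin (k + 1)} (hij : i ≠ j) (p : MvPolynomial (Fin (k + 1)) ℝ) :
    dunklD α j (X i * p) = X i * dunklD α j p := by
  rw [← X_mul_cancel_left_iff (i := j), mul_left_comm]
  simp only [X_mul_dunklD, map_mul, reflectVar_X_of_ne hij, Derivation.leibniz,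
    pderiv_X_of_ne hij, smul_eq_mul]
  ring

theorem dunklD_X_mul_self (i : Fin (k + 1)) (p : MvPolynomial (Fin (k + 1)) ℝ) :
    dunklD α i (X i * p) = X i * dunklD α i p + p + (2 * α i) • reflectVar i p := by
  rw [← X_mul_cancel_left_iff (i := i), mul_add, mul_add]
  simp only [X_mul_dunklD, map_mul, reflectVar_X_self, Derivation.leibniz, pderiv_X_self,
    smul_eq_mul, smul_eq_C_mul, map_ofNat]
  ring

theorem dunklD_dunklD_X_mul_self (i : Fin (k + 1)) (p : MvPolynomial (Fin (k + 1)) ℝ) :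
    dunklD α i (dunklD α i (X i * p)) =
      X i * dunklD α i (dunklD α i p) + (2 : ℝ) • dunklD α i p := by
  have hexpand : dunklD α i (dunklD α i (X i * p)) =
      dunklD α i (X i * dunklD α i p) + dunklD α i p +
        (2 * α i) • dunklD α i (reflectVar i p) := by
    rw [dunklD_X_mul_self]
    change dunklDEnd α i (_ + _ + _ • _) = _
    simp only [map_add, map_smul]
    rfl
  rw [hexpand, dunklD_X_mul_self, dunklD_reflectVar_self]
  module

theorem dunklLap_X_mul (i : Fin (k + 1)) (p : MvPolynomial (Fin (k + 1)) ℝ) :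
    dunklLap α (X i * p) = X i * dunklLap α p + (2 : ℝ) • dunklD α i p := by
  have hsummand (j : Fin (k + 1)) : dunklD α j (dunklD α j (X i * p)) =
      X i * dunklD α j (dunklD α j p) + if j = i then (2 : ℝ) • dunklD α i p else 0 := by
    split_ifs with hji
    · rw [hji, dunklD_dunklD_X_mul_self]
    · simp only [dunklD_X_mul_of_ne α (Ne.symm hji), add_zero]
  simp only [dunklLap, hsummand, sum_add_distrib, mul_sum, sum_ite_eq', mem_univ, if_true]

theorem dunklLap_iterate_succ_X_mul (i : Fin (k + 1)) (p : MvPolynomial (Fin (k + 1)) ℝ)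
    (n : ℕ) :
    (dunklLap α)^[n + 1] (X i * p) = X i * (dunklLap α)^[n + 1] p +
      (2 * (n + 1) : ℝ) • dunklD α i ((dunklLap α)^[n] p) := by
  have hcomm : Commute (dunklLapEnd α) ((2 : ℝ) • dunklDEnd α i) := by
    rw [dunklLapEnd_eq_sum]
    refine .smul_right (.symm (.sum_right _ _ _ fun j _ => ?_)) 2
    exact (dunklDEnd_commute α i j).mul_right (dunklDEnd_commute α i j)
  have hX : dunklLapEnd α * LinearMap.mulLeft ℝ (X i) =
      LinearMap.mulLeft ℝ (X i) * dunklLapEnd α + (2 : ℝ) • dunklDEnd α i :=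
    LinearMap.ext fun q => dunklLap_X_mul α i q
  have h := LinearMap.congr_fun (pow_succ_mul_of_mul_eq_mul_add hX hcomm n) p
  simp only [Module.End.mul_apply, LinearMap.add_apply, LinearMap.smul_apply,
    LinearMap.mulLeft_apply, dunklLapEnd_pow_apply] at h
  rw [h, ← Nat.cast_smul_eq_nsmul ℝ, smul_smul, mul_comm (2 : ℝ)]
  push_cast
  rfl

theorem dunklLap_iterate_eq_zero_of_totalDegree_lt {n : ℕ} {p : MvPolynomial (Fin (k + 1)) ℝ}
    (hp : p.totalDegree < n) : (dunklLap α)^[n] p = 0 := by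
  have hmonomial (β : Fin (k + 1) →₀ ℕ) (c : ℝ) :
      ∀ n, (monomial β c).totalDegree < n → (dunklLap α)^[n] (monomial β c) = 0 := by
    refine induction_on_monomial (fun a => ?_) (fun q i hq => ?_) β c
    · rintro (_ | n) hn
      · exact absurd hn (Nat.not_lt_zero _)
      · rw [Function.iterate_succ_apply, dunklLap_C, dunklLap_iterate_zero]
    · rcases eq_or_ne q 0 with rfl | hq_ne
      · intro n _
        rw [zero_mul, dunklLap_iterate_zero]
      rintro (_ | n) hn
      · exact absurd hn (Nat.not_lt_zero _)
      rw [totalDegree_mul_of_isDomain hq_ne (X_ne_zero i), totalDegree_X,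
        Nat.succ_lt_succ_iff] at hn
      rw [mul_comm, dunklLap_iterate_succ_X_mul, hq n hn, hq (n + 1) (hn.trans n.lt_succ_self),
        dunklD_zero, mul_zero, smul_zero, add_zero]
  rw [← dunklLapEnd_pow_apply, ← support_sum_monomial_coeff p, map_sum]
  refine sum_eq_zero fun β hβ => ?_
  rw [dunklLapEnd_pow_apply, hmonomial β _ n]
  rw [totalDegree_monomial β (mem_support_iff.1 hβ)]
  exact (le_totalDegree hβ).trans_lt hp

end Polynomials

section Functions

open Finset

theorem differentiable_mvPolynomial_eval {σ 𝕜 : Type*} [Finite σ] [NontriviallyNormedField 𝕜]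
    (p : MvPolynomial σ 𝕜) : Differentiable 𝕜 fun y : σ → 𝕜 => eval y p := by
  have := Fintype.ofFinite σ
  induction p using MvPolynomial.induction_on with
  | C a => simp only [eval_C, differentiable_const]
  | add p q hp hq => simpa only [map_add] using hp.fun_add hq
  | mul_X p j hp => simpa only [map_mul, eval_X] using hp.fun_mul (differentiable_apply j)

theorem fderiv_mvPolynomial_eval_single {σ 𝕜 : Type*} [Finite σ] [DecidableEq σ]
    [NontriviallyNormedField 𝕜] (p : MvPolynomial σ 𝕜) (x : σ → 𝕜) (i : σ) :
    fderiv 𝕜 (fun y => eval y p) x (Pi.single i 1) = eval x (pderiv i p) := by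
  have := Fintype.ofFinite σ
  induction p using MvPolynomial.induction_on with
  | C a => simp
  | add p q hp hq =>
    simp only [map_add]
    rw [fderiv_fun_add (differentiable_mvPolynomial_eval p x)
      (differentiable_mvPolynomial_eval q x), ← hp, ← hq]
    rfl
  | mul_X p j hp =>
    have hX : HasFDerivAt (fun y : σ → 𝕜 => y j) (.proj j : (σ → 𝕜) →L[𝕜] 𝕜) x :=
      hasFDerivAt_apply j x
    simp only [map_mul, eval_X]
    rw [((differentiable_mvPolynomial_eval p x).hasFDerivAt.fun_mul hX).fderiv]
    simp [hp, pderiv_X, Pi.single_apply, eq_comm, apply_ite]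

/-- The squared Euclidean norm `r² = ∑ j, x_j²`; the type `ι → ℝ` itself carries the sup norm. -/
def radiusSq {ι : Type*} [Fintype ι] (x : ι → ℝ) : ℝ := ∑ j, x j ^ 2

theorem hasFDerivAt_radiusSq {ι : Type*} [Fintype ι] (x : ι → ℝ) :
    HasFDerivAt radiusSq (∑ j, (2 * x j) • .proj j : (ι → ℝ) →L[ℝ] ℝ) x := by
  refine (HasFDerivAt.fun_sum fun j _ => (hasFDerivAt_apply j x).pow 2).congr_fderiv ?_
  simp

/-- The complement of the coordinate hyperplanes, where no Dunkl quotient has denominator zero. -/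
def regularSet (ι : Type*) : Set (ι → ℝ) := {x | ∀ j, x j ≠ 0}

theorem isOpen_regularSet {ι : Type*} [Finite ι] : IsOpen (regularSet ι) := by
  simp only [regularSet, Set.ofPred_forall]
  exact isOpen_iInter_of_finite fun j => isOpen_ne_fun (continuous_apply j) continuous_const

theorem radiusSq_pos {ι : Type*} [Fintype ι] [Nonempty ι] {x : ι → ℝ} (hx : x ∈ regularSet ι) :
    0 < radiusSq x :=
  sum_pos (fun j _ => sq_pos_of_ne_zero (hx j)) univ_nonempty

theorem radiusSq_update_neg {ι : Type*} [Fintype ι] [DecidableEq ι] (x : ι → ℝ) (i : ι) :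
    radiusSq (Function.update x i (-x i)) = radiusSq x := by
  refine sum_congr rfl fun j _ => ?_
  rcases eq_or_ne j i with rfl | hj <;> simp [*]

theorem update_neg_mem_regularSet {ι : Type*} [DecidableEq ι] {x : ι → ℝ}
    (hx : x ∈ regularSet ι) (i : ι) : Function.update x i (-x i) ∈ regularSet ι := fun j => by
  rcases eq_or_ne j i with rfl | hj
  · simpa using hx j
  · simpa [hj] using hx j

theorem eval_reflectVar (p : MvPolynomial (Fin (k + 1)) ℝ) (j : Fin (k + 1))
    (x : Fin (k + 1) → ℝ) :
    eval x (reflectVar j p) = eval (Function.update x j (-x j)) p := by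
  suffices h : (aeval x).comp (reflectVar j) = aeval (Function.update x j (-x j)) from
    DFunLike.congr_fun h p
  ext i
  rcases eq_or_ne i j with rfl | hij
  · simp [reflectVar_X_self]
  · simp [reflectVar_X_of_ne hij, hij]

variable (α : Fin (k + 1) → ℝ) (i : Fin (k + 1))

theorem dunklF_eval (p : MvPolynomial (Fin (k + 1)) ℝ) {x : Fin (k + 1) → ℝ} (hx : x i ≠ 0) :
    dunklF α i (fun y => eval y p) x = eval x (dunklD α i p) := by
  have h := congrArg (eval x) (X_mul_dunklD α i p)
  simp only [map_mul, map_add, map_sub, eval_X, eval_C, eval_reflectVar] at h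
  rw [dunklF, fderiv_mvPolynomial_eval_single]
  field_simp
  linear_combination -h

theorem dunklF_eqOn_regularSet {f g : (Fin (k + 1) → ℝ) → ℝ} (h : Set.EqOn f g (regularSet _)) :
    Set.EqOn (dunklF α i f) (dunklF α i g) (regularSet _) := fun x hx => by
  have hfg : f =ᶠ[nhds x] g := h.eventuallyEq_of_mem (isOpen_regularSet.mem_nhds hx)
  rw [dunklF, dunklF, hfg.fderiv_eq, h hx, h (update_neg_mem_regularSet hx i)]

theorem dunklF_sum {ι : Type*} {s : Finset ι} {f : ι → (Fin (k + 1) → ℝ) → ℝ}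
    {x : Fin (k + 1) → ℝ} (hf : ∀ a ∈ s, DifferentiableAt ℝ (f a) x) :
    dunklF α i (fun y => ∑ a ∈ s, f a y) x = ∑ a ∈ s, dunklF α i (f a) x := by
  simp only [dunklF, fderiv_fun_sum hf, _root_.sum_apply, ← sum_sub_distrib,
    mul_sum, sum_div, sum_add_distrib]

theorem dunklF_mul_of_even {f g : (Fin (k + 1) → ℝ) → ℝ} {x : Fin (k + 1) → ℝ}
    (hf : DifferentiableAt ℝ f x) (hg : DifferentiableAt ℝ g x)
    (hf_even : f (Function.update x i (-x i)) = f x) :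
    dunklF α i (fun y => f y * g y) x =
      f x * dunklF α i g x + fderiv ℝ f x (Pi.single i 1) * g x := by
  simp only [dunklF, fderiv_fun_mul hf hg, hf_even, add_apply, smul_apply, smul_eq_mul]
  ring

theorem dunklF_radial_mul_eval {φ : ℝ → ℝ} (q : MvPolynomial (Fin (k + 1)) ℝ)
    {x : Fin (k + 1) → ℝ} (hφ : DifferentiableAt ℝ φ (radiusSq x)) (hx : x i ≠ 0) :
    dunklF α i (fun y => φ (radiusSq y) * eval y q) x =
      φ (radiusSq x) * eval x (dunklD α i q) +
        2 * deriv φ (radiusSq x) * eval x (X i * q) := by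
  have hradial : HasFDerivAt (fun y => φ (radiusSq y)) _ x :=
    hφ.hasDerivAt.comp_hasFDerivAt x (hasFDerivAt_radiusSq x)
  rw [dunklF_mul_of_even α i hradial.differentiableAt (differentiable_mvPolynomial_eval q x)
    (congrArg φ (radiusSq_update_neg x i)), dunklF_eval α i q hx, hradial.fderiv]
  simp only [smul_apply, _root_.sum_apply, ContinuousLinearMap.proj_apply, Pi.single_apply,
    smul_eq_mul, mul_ite, mul_one, mul_zero, sum_ite_eq', mem_univ, if_true, map_mul, eval_X]
  ring

theorem dunklF_const_mul (c : ℝ) (f : (Fin (k + 1) → ℝ) → ℝ) (x : Fin (k + 1) → ℝ) :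
    dunklF α i (fun y => c * f y) x = c * dunklF α i f x := by
  have hderiv : fderiv ℝ (fun y => c * f y) x = c • fderiv ℝ f x :=
    congrFun (fderiv_const_smul_field c) x
  simp only [dunklF, hderiv, smul_apply, smul_eq_mul]
  ring

theorem dunklMonomialOp_induction {f : (Fin (k + 1) → ℝ) → ℝ}
    {P : (Fin (k + 1) →₀ ℕ) → ((Fin (k + 1) → ℝ) → ℝ) → Prop} (zero : P 0 f)
    (step : ∀ i β g, P β g → P (Finsupp.single i 1 + β) (dunklF α i g))
    (β : Fin (k + 1) →₀ ℕ) : P β (dunklMonomialOp α β f) := by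
  have hiterate (i n β g) (h : P β g) : P (Finsupp.single i n + β) ((dunklF α i)^[n] g) := by
    induction n with
    | zero => simpa using h
    | succ n ih =>
      rw [Function.iterate_succ_apply', add_comm n, Finsupp.single_add, add_assoc]
      exact step i _ _ ih
  have hlist (l : List (Fin (k + 1))) : P (l.map fun j => Finsupp.single j (β j)).sum
      ((l.map fun j => (dunklF α j)^[β j]).foldr (· ∘ ·) id f) := by
    induction l with
    | nil => exact zero
    | cons i l ih =>
      rw [List.map_cons, List.sum_cons]
      exact hiterate i (β i) _ _ ih
  have hsum : ((List.finRange (k + 1)).map fun j => Finsupp.single j (β j)).sum = β := by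
    rw [← List.ofFn_eq_map, List.sum_ofFn, Finsupp.univ_sum_single]
  rw [dunklMonomialOp, List.ofFn_eq_map]
  have h := hlist (List.finRange (k + 1))
  rwa [hsum] at h

end Functions

section Hobson

open Finset

theorem differentiableAt_iteratedDeriv_of_contDiffOn {𝕜 F : Type*} [NontriviallyNormedField 𝕜]
    [NormedAddCommGroup F] [NormedSpace 𝕜 F] {f : 𝕜 → F} {s : Set 𝕜} {x : 𝕜} {m : WithTop ℕ∞}
    {n : ℕ} (hf : ContDiffOn 𝕜 m f s) (hs : s ∈ nhds x) (hn : n < m) :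
    DifferentiableAt 𝕜 (iteratedDeriv n f) x := by
  rw [← iteratedDerivWithin_univ, ← differentiableWithinAt_univ]
  exact (hf.contDiffAt hs).differentiableWithinAt_iteratedDerivWithin hn (by simp)

theorem iteratedDeriv_rpow_const_eq_ascPochhammer (γ : ℝ) (n : ℕ) (t : ℝ) :
    iteratedDeriv n (fun t => t ^ γ) t =
      (-1) ^ n * (ascPochhammer ℝ n).eval (-γ) * t ^ (γ - n) := by
  rw [iteratedDeriv_eq_iterate, Real.iter_deriv_rpow_const,
    ascPochhammer_eval_neg_eq_descPochhammer, ← mul_assoc, ← mul_pow]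
  simp

/-- The coefficient `2 ^ (n - j) / j!` of `φ⁽ⁿ⁾(r²) Δ_α ^ j p` in Hobson's formula; the exponent
may be negative, hence the subtraction in `ℤ`. -/
noncomputable def hobsonCoeff (j n : ℕ) : ℝ := 2 ^ ((n : ℤ) - j) / j.factorial

theorem hobsonCoeff_succ_right (j n : ℕ) : hobsonCoeff j (n + 1) = 2 * hobsonCoeff j n := by
  simp only [hobsonCoeff, Nat.cast_succ, add_sub_right_comm, zpow_add_one₀ (two_ne_zero' ℝ)]
  ring

theorem hobsonCoeff_succ_left_mul (j n : ℕ) :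
    hobsonCoeff (j + 1) n * (2 * (j + 1)) = hobsonCoeff j n := by
  simp only [hobsonCoeff, Nat.cast_succ, sub_add_eq_sub_sub, zpow_sub_one₀ (two_ne_zero' ℝ),
    Nat.factorial_succ, Nat.cast_mul]
  field_simp

/-- The right-hand side of Hobson's formula for the radial function `x ↦ φ (r²)` and a polynomial
`p` of degree `m`. A pair `(j, n)` with `j + n = m` stands for the `j`-th power of the Dunkl
Laplacian and the `n`-th derivative of `φ`. -/
noncomputable def hobsonSum (α : Fin (k + 1) → ℝ) (φ : ℝ → ℝ) (m : ℕ)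
    (p : MvPolynomial (Fin (k + 1)) ℝ) (x : Fin (k + 1) → ℝ) : ℝ :=
  ∑ jn ∈ antidiagonal m, hobsonCoeff jn.1 jn.2 *
    (iteratedDeriv jn.2 φ (radiusSq x) * eval x ((dunklLap α)^[jn.1] p))

variable (α : Fin (k + 1) → ℝ) (φ : ℝ → ℝ) (m : ℕ)

theorem hobsonSum_eq_sum_coeff (p : MvPolynomial (Fin (k + 1)) ℝ) (x : Fin (k + 1) → ℝ) :
    hobsonSum α φ m p x =
      ∑ β ∈ p.support, coeff β p * hobsonSum α φ m (monomial β 1) x := by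
  have hlap (j : ℕ) : eval x ((dunklLap α)^[j] p) =
      ∑ β ∈ p.support, coeff β p * eval x ((dunklLap α)^[j] (monomial β 1)) := by
    simp only [← dunklLapEnd_pow_apply, ← smul_eval, ← map_smul, ← map_sum, smul_eq_mul,
      mul_one, support_sum_monomial_coeff]
  simp only [hobsonSum, hlap, mul_sum]
  rw [sum_comm]
  exact sum_congr rfl fun β _ => sum_congr rfl fun jn _ => by ring

theorem hobsonSum_succ_X_mul (i : Fin (k + 1)) {p : MvPolynomial (Fin (k + 1)) ℝ}
    (hp : p.totalDegree ≤ m) (x : Fin (k + 1) → ℝ) :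
    hobsonSum α φ (m + 1) (X i * p) x =
      ∑ jn ∈ antidiagonal m, hobsonCoeff jn.1 jn.2 *
        (iteratedDeriv jn.2 φ (radiusSq x) * eval x (dunklD α i ((dunklLap α)^[jn.1] p)) +
          2 * iteratedDeriv (jn.2 + 1) φ (radiusSq x) *
            eval x (X i * (dunklLap α)^[jn.1] p)) := by
  let F (n : ℕ) : ℝ := iteratedDeriv n φ (radiusSq x)
  let u (j : ℕ) : ℝ := eval x (X i * (dunklLap α)^[j] p)
  let v (j : ℕ) : ℝ := eval x (dunklD α i ((dunklLap α)^[j] p))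
  have hzero : u (m + 1) = 0 := by
    simp only [u, dunklLap_iterate_eq_zero_of_totalDegree_lt α (Nat.lt_succ_of_le hp), mul_zero,
      map_zero]
  have hsucc (j : ℕ) :
      eval x ((dunklLap α)^[j + 1] (X i * p)) = u (j + 1) + 2 * (j + 1) * v j := by
    rw [dunklLap_iterate_succ_X_mul, map_add, smul_eval]
  calc hobsonSum α φ (m + 1) (X i * p) x
      = hobsonCoeff 0 (m + 1) * (F (m + 1) * u 0) +
          ∑ jn ∈ antidiagonal m, hobsonCoeff (jn.1 + 1) jn.2 *
            (F jn.2 * (u (jn.1 + 1) + 2 * (jn.1 + 1) * v jn.1)) := by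
        rw [hobsonSum, Nat.sum_antidiagonal_succ]
        simp only [hsucc]
        rfl
    _ = ∑ jn ∈ antidiagonal (m + 1), hobsonCoeff jn.1 jn.2 * (F jn.2 * u jn.1) +
          ∑ jn ∈ antidiagonal m, hobsonCoeff jn.1 jn.2 * (F jn.2 * v jn.1) := by
        rw [Nat.sum_antidiagonal_succ, add_assoc, ← sum_add_distrib]
        congr 1
        refine sum_congr rfl fun jn _ => ?_
        rw [← hobsonCoeff_succ_left_mul jn.1]
        ring
    _ = ∑ jn ∈ antidiagonal m,
          hobsonCoeff jn.1 jn.2 * (F jn.2 * v jn.1 + 2 * F (jn.2 + 1) * u jn.1) := by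
        rw [Nat.sum_antidiagonal_succ', hzero, mul_zero, mul_zero, zero_add, ← sum_add_distrib]
        refine sum_congr rfl fun jn _ => ?_
        rw [hobsonCoeff_succ_right]
        ring

variable {φ m}

theorem dunklF_hobsonSum_eqOn (i : Fin (k + 1)) {p : MvPolynomial (Fin (k + 1)) ℝ}
    (hp : p.totalDegree ≤ m) (hφ : ContDiffOn ℝ (m + 1) φ (Set.Ioi 0)) :
    Set.EqOn (dunklF α i (hobsonSum α φ m p)) (hobsonSum α φ (m + 1) (X i * p))
      (regularSet _) := by
  intro x hx
  have hderiv : ∀ jn ∈ antidiagonal m,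
      DifferentiableAt ℝ (iteratedDeriv jn.2 φ) (radiusSq x) := fun jn hjn =>
    differentiableAt_iteratedDeriv_of_contDiffOn hφ (Ioi_mem_nhds (radiusSq_pos hx)) <| by
      exact_mod_cast Nat.lt_succ_of_le (HasAntidiagonal.antidiagonal.snd_le hjn)
  have hsummand : ∀ jn ∈ antidiagonal m, DifferentiableAt ℝ (fun y => hobsonCoeff jn.1 jn.2 *
      (iteratedDeriv jn.2 φ (radiusSq y) * eval y ((dunklLap α)^[jn.1] p))) x := fun jn hjn =>
    (((hderiv jn hjn).fun_comp' x (hasFDerivAt_radiusSq x).differentiableAt).fun_mul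
      (differentiable_mvPolynomial_eval _ x)).const_mul _
  rw [hobsonSum_succ_X_mul α φ m i hp]
  refine (dunklF_sum α i hsummand).trans ?_
  refine sum_congr rfl fun jn hjn => ?_
  rw [dunklF_const_mul, dunklF_radial_mul_eval α i _ (hderiv jn hjn) (hx i), iteratedDeriv_succ]

theorem dunklMonomialOp_radial_eqOn_hobsonSum (β : Fin (k + 1) →₀ ℕ)
    (hφ : ContDiffOn ℝ β.degree φ (Set.Ioi 0)) :
    Set.EqOn (dunklMonomialOp α β fun y => φ (radiusSq y))
      (hobsonSum α φ β.degree (monomial β 1)) (regularSet _) := by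
  refine dunklMonomialOp_induction α (P := fun β g => ContDiffOn ℝ β.degree φ (Set.Ioi 0) →
    Set.EqOn g (hobsonSum α φ β.degree (monomial β 1)) (regularSet _)) (fun _ x _ => ?_)
    (fun i β g hg => ?_) β hφ
  · simp [hobsonSum, hobsonCoeff]
  · have hdegree : (Finsupp.single i 1 + β).degree = β.degree + 1 := by
      rw [map_add, Finsupp.degree_single, add_comm]
    have hmonomial : monomial (Finsupp.single i 1 + β) (1 : ℝ) = X i * monomial β 1 := by
      rw [X, monomial_mul, one_mul]
    have htotal : (monomial β (1 : ℝ)).totalDegree ≤ β.degree :=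
      (totalDegree_monomial β one_ne_zero).le
    rw [hdegree, hmonomial, Nat.cast_add_one]
    intro hφ x hx
    rw [dunklF_eqOn_regularSet α i (hg (hφ.of_le le_self_add)) hx,
      dunklF_hobsonSum_eqOn α i htotal hφ hx]

theorem dunklOp_radial_eqOn_hobsonSum {p : MvPolynomial (Fin (k + 1)) ℝ}
    (hφ : ContDiffOn ℝ m φ (Set.Ioi 0)) (hp : p.IsHomogeneous m) :
    Set.EqOn (dunklOp α p fun y => φ (radiusSq y)) (hobsonSum α φ m p) (regularSet _) := by
  intro x hx
  rw [hobsonSum_eq_sum_coeff, dunklOp]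
  refine sum_congr rfl fun β hβ => ?_
  obtain rfl : β.degree = m := by
    rw [Finsupp.degree_eq_weight_one]
    exact hp (mem_support_iff.1 hβ)
  rw [dunklMonomialOp_radial_eqOn_hobsonSum α β hφ hx]

end Hobson

/-- Corollary 5.4: for a homogeneous polynomial `f_m` of degree `m` and `γ ∈ ℝ`,
`f_m(D_0,…,D_k)[r^{2γ}] = ∑_{j=0}^m 2^{m-2j} (-1)^{m-j} (-γ)_{m-j} r^{2(γ-m+j)} (1/j!) Δ_α^j f_m(x)`. -/
theorem hobson_formula_rpow (α : Fin (k + 1) → ℝ) (m : ℕ)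
    (p : MvPolynomial (Fin (k + 1)) ℝ) (hp : p.IsHomogeneous m)
    (γ : ℝ) (x : Fin (k + 1) → ℝ) (hx : ∀ j, x j ≠ 0) :
    dunklOp α p (fun y => (∑ j, (y j) ^ 2) ^ γ) x =
      ∑ j ∈ Finset.range (m + 1),
        (2 : ℝ) ^ ((m : ℤ) - 2 * (j : ℤ)) * (-1) ^ (m - j) *
          (ascPochhammer ℝ (m - j)).eval (-γ) * (∑ i, (x i) ^ 2) ^ (γ - m + j) *
          (1 / (j.factorial : ℝ)) * eval x ((dunklLap α)^[j] p) := by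
  have hpow : ContDiffOn ℝ m (fun t : ℝ => t ^ γ) (Set.Ioi 0) := fun t ht =>
    (Real.contDiffAt_rpow_const_of_ne ht.ne').contDiffWithinAt
  refine (dunklOp_radial_eqOn_hobsonSum α hpow hp hx).trans ?_
  rw [hobsonSum, Finset.Nat.sum_antidiagonal_eq_sum_range_succ_mk]
  refine Finset.sum_congr rfl fun j hj => ?_
  have hjm : j ≤ m := Finset.mem_range_succ_iff.1 hj
  have htwo : ((m - j : ℕ) : ℤ) - j = m - 2 * j := by
    omega
  have hexp : γ - (m - j : ℕ) = γ - m + j := by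
    rw [Nat.cast_sub hjm]
    ring
  simp only [hobsonCoeff, iteratedDeriv_rpow_const_eq_ascPochhammer, htwo, hexp, radiusSq]
  ring
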